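/- arXiv:2201.09262 — 2 statements merged into one kernel-verified Lean document; each statement's English description precedes it below -/
import Mathlib

section
/- For all nonnegative integers n and b, ∫₀¹ x^(2n) · arccos^(2b+1)(x)/(2b+1)! dx = 4^n/((2n+1)²·C(2n,n)) · Σ_{n < m₁ < ... < m_b} 1/((2m₁+1)² ⋯ (2m_b+1)²), where the empty sum (b = 0) equals 1. -/
open Real

/-- `∑_{n < m₁ < ⋯ < m_b} 1/((2m₁+1)² ⋯ (2m_b+1)²)`; equals `1` when `b = 0`. -/
noncomputable def tTail (b n : ℕ) : ℝ :=
  ∑' f : {f : Fin b → ℕ // StrictMono f ∧ ∀ i, n < f i},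
    ∏ i, 1 / (2 * (f.1 i : ℝ) + 1) ^ 2

/-- divided powers -/
noncomputable def dpw (b : ℕ) (x : ℝ) : ℝ := x ^ b / (Nat.factorial b)

theorem dpw_deriv (b : ℕ) (x : ℝ) : HasDerivAt (dpw (b + 1)) (dpw b x) x := by
  unfold dpw
  have h := (hasDerivAt_pow (b + 1) x).div_const ((Nat.factorial (b + 1) : ℕ) : ℝ)
  refine h.congr_deriv ?_
  rw [Nat.factorial_succ]
  have : (Nat.factorial b : ℝ) ≠ 0 := by positivity
  have : (b : ℝ) + 1 ≠ 0 := by positivity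
  push_cast
  field_simp

theorem dpw_cont (b : ℕ) : Continuous (dpw b) := by
  unfold dpw; fun_prop

theorem dpw_zero (b : ℕ) : dpw (b + 1) 0 = 0 := by simp [dpw]

noncomputable def Jint (n b : ℕ) : ℝ := ∫ t in (0:ℝ)..(π / 2), cos t ^ (2 * n + 1) * dpw (2 * b) t

theorem Jint_ii (n b : ℕ) :
    IntervalIntegrable (fun t => cos t ^ n * dpw b t) MeasureTheory.volume 0 (π / 2) := by
  apply Continuous.intervalIntegrable
  have := dpw_cont b
  fun_prop

theorem Jint_rec (n b : ℕ) : Jint (n + 1) b =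
    (2 * n + 3) * (2 * n + 2) * Jint n (b + 1) - (2 * n + 3) ^ 2 * Jint (n + 1) (b + 1) := by
  have key : ∫ t in (0:ℝ)..(π / 2), (((2 * n + 3) * (2 * n + 2)) * (cos t ^ (2 * n + 1) * dpw (2 * (b + 1)) t)
      - (2 * n + 3) ^ 2 * (cos t ^ (2 * (n + 1) + 1) * dpw (2 * (b + 1)) t)
      - cos t ^ (2 * (n + 1) + 1) * dpw (2 * b) t) = 0 := by
    have hd : ∀ t ∈ Set.uIcc 0 (π / 2), HasDerivAt
        (fun t => -((2 * n + 3) * (cos t ^ (2 * n + 2) * sin t * dpw (2 * b + 2) t))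
          - cos t ^ (2 * n + 3) * dpw (2 * b + 1) t)
        (((2 * n + 3) * (2 * n + 2)) * (cos t ^ (2 * n + 1) * dpw (2 * (b + 1)) t)
      - (2 * n + 3) ^ 2 * (cos t ^ (2 * (n + 1) + 1) * dpw (2 * (b + 1)) t)
      - cos t ^ (2 * (n + 1) + 1) * dpw (2 * b) t) t := by
      intro t _
      have h1 := (((((hasDerivAt_cos t).fun_pow (2 * n + 2)).fun_mul (hasDerivAt_sin t)).fun_mul
        (dpw_deriv (2 * b + 1) t)).const_mul (2 * (n:ℝ) + 3)).fun_neg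
      have h2 := ((hasDerivAt_cos t).fun_pow (2 * n + 3)).fun_mul (dpw_deriv (2 * b) t)
      refine (h1.fun_sub h2).congr_deriv ?_
      have e : 2 * (b + 1) = 2 * b + 1 + 1 := by ring
      rw [e]
      have hs : sin t ^ 2 = 1 - cos t ^ 2 := by rw [sin_sq]
      simp only [show 2 * n + 2 - 1 = 2 * n + 1 by omega, show 2 * n + 3 - 1 = 2 * n + 2 by omega]
      push_cast
      linear_combination ((2 * n + 3) * (2 * n + 2) * cos t ^ (2 * n + 1) * dpw (2 * b + 1 + 1) t) * hs
    rw [intervalIntegral.integral_eq_sub_of_hasDerivAt hd]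
    · simp [dpw_zero]
    · exact (((Jint_ii _ _).const_mul _).sub ((Jint_ii _ _).const_mul _)).sub (Jint_ii _ _)
  rw [intervalIntegral.integral_sub (((Jint_ii _ _).const_mul _).sub ((Jint_ii _ _).const_mul _)) (Jint_ii _ _),
    intervalIntegral.integral_sub ((Jint_ii _ _).const_mul _) ((Jint_ii _ _).const_mul _),
    intervalIntegral.integral_const_mul, intervalIntegral.integral_const_mul] at key
  unfold Jint
  linarith

theorem Jint_zero_rec (n : ℕ) : (2 * n + 3) * Jint (n + 1) 0 = (2 * n + 2) * Jint n 0 := by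
  have h := integral_cos_pow (a := 0) (b := π / 2) (2 * n + 1)
  simp only [Jint, mul_zero, dpw, pow_zero, Nat.factorial_zero, Nat.cast_one, div_one, mul_one]
  rw [show 2 * (n + 1) + 1 = 2 * n + 1 + 2 by ring, h]
  simp
  field_simp
  ring

theorem Jint_zero (n : ℕ) : Jint n 0 = 4 ^ n / ((2 * n + 1) * (Nat.centralBinom n : ℝ)) := by
  induction n with
  | zero => simp [Jint, dpw]
  | succ n ih =>
    have h := Jint_zero_rec n
    rw [ih] at h
    have hc : ((n:ℝ) + 1) * (Nat.centralBinom (n + 1) : ℝ) = 2 * (2 * n + 1) * Nat.centralBinom n := by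
      exact_mod_cast Nat.succ_mul_centralBinom_succ n
    have p0 : (0:ℝ) < Nat.centralBinom n := by exact_mod_cast Nat.centralBinom_pos n
    have p1 : (0:ℝ) < Nat.centralBinom (n + 1) := by exact_mod_cast Nat.centralBinom_pos (n + 1)
    have hJ : Jint (n + 1) 0 = (2 * n + 2) * (4 ^ n / ((2 * n + 1) * (Nat.centralBinom n : ℝ))) / (2 * n + 3) := by
      field_simp
      field_simp at h
      linarith
    rw [hJ]
    push_cast
    rw [show (2 * ((n:ℝ) + 1) + 1) = 2 * n + 3 by ring]
    field_simp
    linear_combination (2 * 4 ^ n) * hc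

theorem Jint_zero_pos (n : ℕ) : 0 < Jint n 0 := by
  rw [Jint_zero]
  have p0 : (0:ℝ) < Nat.centralBinom n := by exact_mod_cast Nat.centralBinom_pos n
  positivity

noncomputable def Arat (n b : ℕ) : ℝ := Jint n b / Jint n 0

theorem Jint_nonneg (n b : ℕ) : 0 ≤ Jint n b := by
  unfold Jint
  apply intervalIntegral.integral_nonneg (by positivity)
  intro t ht
  have : 0 ≤ cos t := cos_nonneg_of_mem_Icc ⟨by linarith [ht.1, pi_pos], ht.2⟩
  have := ht.1
  unfold dpw
  positivity

theorem Arat_nonneg (n b : ℕ) : 0 ≤ Arat n b := div_nonneg (Jint_nonneg _ _) (Jint_nonneg _ _)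

theorem Arat_rec (n b : ℕ) :
    Arat n (b + 1) - Arat (n + 1) (b + 1) = 1 / (2 * ((n + 1 : ℕ) : ℝ) + 1) ^ 2 * Arat (n + 1) b := by
  have h := Jint_rec n b
  have h0 := Jint_zero_rec n
  have p := Jint_zero_pos n
  have hJ : Jint (n + 1) 0 = (2 * n + 2) * Jint n 0 / (2 * n + 3) := by
    field_simp; linarith
  unfold Arat
  rw [hJ, h]
  push_cast
  rw [show (2 * ((n:ℝ) + 1) + 1) = 2 * n + 3 by ring]
  field_simp
  try ring

theorem Jint_bound (n b : ℕ) :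
    Jint n (b + 1) ≤ (π / 2) ^ (2 * b + 2) * (Jint n 0 - Jint (n + 1) 0) := by
  unfold Jint
  rw [← intervalIntegral.integral_sub (Jint_ii _ _) (Jint_ii _ _),
    ← intervalIntegral.integral_const_mul]
  apply intervalIntegral.integral_mono_on (by positivity) (Jint_ii _ _)
    (((Jint_ii _ _).sub (Jint_ii _ _)).const_mul _)
  intro t ht
  have hc : 0 ≤ cos t := cos_nonneg_of_mem_Icc ⟨by linarith [ht.1, pi_pos], ht.2⟩
  have ht0 := ht.1
  have hs : t ≤ π / 2 * sin t := by
    have := mul_le_sin ht.1 ht.2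
    have h2 := mul_le_mul_of_nonneg_left this (show 0 ≤ π / 2 by positivity)
    have : π / 2 * (2 / π * t) = t := by field_simp
    linarith
  have hd : dpw (2 * (b + 1)) t ≤ t ^ (2 * (b + 1)) := by
    unfold dpw
    apply div_le_self (by positivity)
    exact_mod_cast Nat.factorial_pos _
  have h2 : t ^ (2 * (b + 1)) ≤ (π / 2) ^ (2 * b + 2) * sin t ^ 2 := by
    calc t ^ (2 * (b + 1)) = t ^ (2 * b) * t ^ 2 := by ring
      _ ≤ (π / 2) ^ (2 * b) * (π / 2 * sin t) ^ 2 := by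
        gcongr
        exact ht.2
      _ = _ := by ring
  calc cos t ^ (2 * n + 1) * dpw (2 * (b + 1)) t
      ≤ cos t ^ (2 * n + 1) * ((π / 2) ^ (2 * b + 2) * sin t ^ 2) := by
        gcongr
        exact hd.trans h2
    _ = _ := by
      rw [sin_sq]
      simp [dpw]
      ring

theorem Arat_bound (n b : ℕ) : Arat n (b + 1) ≤ (π / 2) ^ (2 * b + 2) * (1 / ((n : ℝ) + 1)) := by
  have h := Jint_bound n b
  have h0 := Jint_zero_rec n
  have p := Jint_zero_pos n
  have hJ : Jint n 0 - Jint (n + 1) 0 = Jint n 0 / (2 * n + 3) := by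
    field_simp; linarith
  unfold Arat
  rw [div_le_iff₀ p]
  refine h.trans ?_
  rw [hJ, mul_assoc]
  gcongr
  rw [div_mul_eq_mul_div, one_mul]
  gcongr
  · linarith
  · norm_num

open Filter Topology in
theorem Arat_tendsto (b : ℕ) : Tendsto (fun n => Arat n (b + 1)) atTop (𝓝 0) := by
  have h := (tendsto_one_div_add_atTop_nhds_zero_nat (𝕜 := ℝ)).const_mul ((π / 2) ^ (2 * b + 2))
  rw [mul_zero] at h
  exact squeeze_zero (fun n => Arat_nonneg n _) (fun n => Arat_bound n b) h

open Filter Topology in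
theorem Arat_hasSum (n b : ℕ) :
    HasSum (fun k : ℕ => 1 / (2 * ((n + 1 + k : ℕ) : ℝ) + 1) ^ 2 * Arat (n + 1 + k) b)
      (Arat n (b + 1)) := by
  rw [hasSum_iff_tendsto_nat_of_nonneg]
  · have hs : ∀ N : ℕ, ∑ k ∈ Finset.range N,
        1 / (2 * ((n + 1 + k : ℕ) : ℝ) + 1) ^ 2 * Arat (n + 1 + k) b
        = Arat n (b + 1) - Arat (N + n) (b + 1) := by
      intro N
      induction N with
      | zero => simp
      | succ N ih =>
        rw [Finset.sum_range_succ, ih, show n + 1 + N = N + n + 1 by ring, ← Arat_rec,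
          show N + 1 + n = N + n + 1 by ring]
        ring
    simp only [hs]
    have h := ((tendsto_add_atTop_iff_nat n).2 (Arat_tendsto b)).const_sub (Arat n (b + 1))
    rwa [sub_zero] at h
  · intro k
    have := Arat_nonneg (n + 1 + k) b
    positivity

abbrev Sidx (b n : ℕ) := {f : Fin b → ℕ // StrictMono f ∧ ∀ i, n < f i}

def consMap (b n : ℕ) (p : Σ k : ℕ, Sidx b (n + 1 + k)) : Sidx (b + 1) n :=
  ⟨Fin.cons (n + 1 + p.1) p.2.1, by
    constructor
    · intro i j hij
      induction j using Fin.cases with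
      | zero => exact absurd hij (by simp)
      | succ j =>
        induction i using Fin.cases with
        | zero => simpa using p.2.2.2 j
        | succ i => simpa using p.2.2.1 (by simpa using hij)
    · intro i
      induction i using Fin.cases with
      | zero => simp; omega
      | succ i =>
        have := p.2.2.2 i
        simp; omega⟩

theorem consMap_bij (b n : ℕ) : Function.Bijective (consMap b n) := by
  constructor
  · rintro ⟨k, f, hf⟩ ⟨l, g, hg⟩ h
    have h1 := congrArg Subtype.val h
    simp only [consMap] at h1
    obtain ⟨h2, h3⟩ := Fin.cons_inj.1 h1
    obtain rfl : k = l := by omega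
    subst h3
    rfl
  · rintro ⟨f, hf1, hf2⟩
    have h0 := hf2 0
    refine ⟨⟨f 0 - (n + 1), fun i => f i.succ, ?_, ?_⟩, ?_⟩
    · intro i j hij
      exact hf1 (by simpa using hij)
    · intro i
      have := hf1 (Fin.succ_pos i)
      change n + 1 + (f 0 - (n + 1)) < f i.succ
      omega
    · apply Subtype.ext
      funext i
      induction i using Fin.cases with
      | zero => simp [consMap]; omega
      | succ i => simp [consMap]

theorem tTail_hasSum (b n : ℕ) :
    HasSum (fun f : Sidx b n => ∏ i, 1 / (2 * (f.1 i : ℝ) + 1) ^ 2) (Arat n b) := by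
  induction b generalizing n with
  | zero =>
    have : Arat n 0 = 1 := div_self (Jint_zero_pos n).ne'
    rw [this]
    let _ : Unique (Sidx 0 n) :=
      ⟨⟨⟨fun i => i.elim0, fun i => i.elim0, fun i => i.elim0⟩⟩,
        fun f => Subtype.ext (funext fun i => i.elim0)⟩
    have h := hasSum_unique (fun f : Sidx 0 n => ∏ i, 1 / (2 * (f.1 i : ℝ) + 1) ^ 2)
    simpa using h
  | succ b ih =>
    rw [← (Equiv.ofBijective _ (consMap_bij b n)).hasSum_iff]
    have e : ((fun f : Sidx (b + 1) n => ∏ i, 1 / (2 * (f.1 i : ℝ) + 1) ^ 2) ∘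
        (Equiv.ofBijective _ (consMap_bij b n))) = fun p : Σ k : ℕ, Sidx b (n + 1 + k) =>
        1 / (2 * ((n + 1 + p.1 : ℕ) : ℝ) + 1) ^ 2 * ∏ i, 1 / (2 * (p.2.1 i : ℝ) + 1) ^ 2 := by
      funext p
      simp only [Function.comp, Equiv.ofBijective_apply, consMap, Fin.prod_univ_succ,
        Fin.cons_zero, Fin.cons_succ]
    rw [e]
    have hin : ∀ k : ℕ, HasSum (fun f : Sidx b (n + 1 + k) =>
        1 / (2 * ((n + 1 + k : ℕ) : ℝ) + 1) ^ 2 * ∏ i, 1 / (2 * (f.1 i : ℝ) + 1) ^ 2)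
        (1 / (2 * ((n + 1 + k : ℕ) : ℝ) + 1) ^ 2 * Arat (n + 1 + k) b) :=
      fun k => (ih (n + 1 + k)).mul_left _
    refine HasSum.sigma_of_hasSum (Arat_hasSum n b) hin ?_
    rw [summable_sigma_of_nonneg]
    · refine ⟨fun k => (hin k).summable, ?_⟩
      have : ∀ k : ℕ, _ := fun k => (hin k).tsum_eq
      simp only [this]
      exact (Arat_hasSum n b).summable
    · intro p
      have : 0 ≤ ∏ i, 1 / (2 * (p.2.1 i : ℝ) + 1) ^ 2 :=
        Finset.prod_nonneg fun i _ => by positivity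
      positivity

theorem moment_eq (n b : ℕ) :
    (∫ x in (0:ℝ)..1, x ^ (2 * n) * dpw (2 * b + 1) (arccos x)) = 1 / (2 * n + 1) * Jint n b := by
  have hD := dpw_cont (2 * b + 1)
  have h1 := intervalIntegral.integral_comp_mul_deriv (a := π / 2) (b := 0) (f := cos)
    (f' := fun t => - sin t) (g := fun x => x ^ (2 * n) * dpw (2 * b + 1) (arccos x))
    (fun t _ => hasDerivAt_cos t) (by fun_prop)
    (by have := continuous_arccos; fun_prop)
  rw [cos_pi_div_two, cos_zero] at h1
  rw [← h1, intervalIntegral.integral_symm]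
  have h2 : ∫ t in (0:ℝ)..(π / 2),
      ((fun x => x ^ (2 * n) * dpw (2 * b + 1) (arccos x)) ∘ cos) t * (- sin t) =
      ∫ t in (0:ℝ)..(π / 2), - (cos t ^ (2 * n) * sin t * dpw (2 * b + 1) t) := by
    apply intervalIntegral.integral_congr
    intro t ht
    rw [Set.uIcc_of_le (by positivity)] at ht
    simp only [Function.comp]
    rw [arccos_cos ht.1 (by linarith [ht.2, pi_pos])]
    ring
  rw [h2]
  have key : ∫ t in (0:ℝ)..(π / 2), ((cos t ^ (2 * n + 1) * dpw (2 * b) t) +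
      (2 * n + 1) * (- (cos t ^ (2 * n) * sin t * dpw (2 * b + 1) t))) = 0 := by
    have hd : ∀ t ∈ Set.uIcc 0 (π / 2), HasDerivAt
        (fun t => cos t ^ (2 * n + 1) * dpw (2 * b + 1) t)
        ((cos t ^ (2 * n + 1) * dpw (2 * b) t) +
      (2 * n + 1) * (- (cos t ^ (2 * n) * sin t * dpw (2 * b + 1) t))) t := by
      intro t _
      refine (((hasDerivAt_cos t).fun_pow (2 * n + 1)).fun_mul (dpw_deriv (2 * b) t)).congr_deriv ?_
      simp only [Nat.add_sub_cancel]
      push_cast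
      ring
    rw [intervalIntegral.integral_eq_sub_of_hasDerivAt hd]
    · simp [dpw_zero]
    · apply Continuous.intervalIntegrable
      have := dpw_cont (2 * b)
      fun_prop
  rw [intervalIntegral.integral_add (Jint_ii _ _) (by
    apply Continuous.intervalIntegrable
    fun_prop), intervalIntegral.integral_const_mul] at key
  unfold Jint
  field_simp
  linarith

theorem arccos_even_moments (n b : ℕ) :
    (∫ x in (0:ℝ)..1, x ^ (2 * n) *
        (Real.arccos x ^ (2 * b + 1) / (Nat.factorial (2 * b + 1)))) =
      4 ^ n / ((2 * (n : ℝ) + 1) ^ 2 * (Nat.choose (2 * n) n : ℝ)) * tTail b n := by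
  have h := moment_eq n b
  unfold dpw at h
  rw [h]
  have hT : tTail b n = Arat n b := (tTail_hasSum b n).tsum_eq
  rw [hT]
  unfold Arat
  rw [Jint_zero, Nat.centralBinom]
  have : (0:ℝ) < Nat.choose (2 * n) n := by
    exact_mod_cast Nat.choose_pos (by omega)
  field_simp
end

section
/- For all nonnegative integers a, b: ∫₀¹ (2 arcsin x)^(2a+2)/((2a+2)! · x) · (2 arccos x)^(2b+1)/(2b+1)! dx = (π/2) · H(a,b), where H(a,b) = ζ(2,...,2,3,2,...,2) with a twos before the 3 and b twos after. -/
open Real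

/-- `∑_{n < m₁ < ⋯ < m_b} 1/(m₁² ⋯ m_b²)`; equals `1` when `b = 0`. -/
noncomputable def zetaTail (b n : ℕ) : ℝ :=
  ∑' f : {f : Fin b → ℕ // StrictMono f ∧ ∀ i, n < f i}, ∏ i, 1 / ((f.1 i : ℝ)) ^ 2

/-- `∑_{0 < n₁ < ⋯ < n_a < n} 1/(n₁² ⋯ n_a²)`; equals `1` when `a = 0`. -/
noncomputable def zetaHead (a n : ℕ) : ℝ :=
  ∑' f : {f : Fin a → ℕ // StrictMono f ∧ ∀ i, 0 < f i ∧ f i < n},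
    ∏ i, 1 / ((f.1 i : ℝ)) ^ 2

/-- The multiple zeta value `ζ(2,…,2,3,2,…,2)` with `a` twos before the `3` and `b` after. -/
noncomputable def H (a b : ℕ) : ℝ :=
  ∑' n : ℕ+, (1 / (n : ℝ) ^ 3) * zetaHead a n * zetaTail b n


/-- Normalizing constants `4^n / C(2n,n)`. -/
noncomputable def cc (n : ℕ) : ℝ := 4 ^ n / (Nat.centralBinom n : ℝ)

lemma cc_pos (n : ℕ) : 0 < cc n := by
  unfold cc
  have := Nat.centralBinom_pos n
  positivity

lemma cc_zero : cc 0 = 1 := by simp [cc]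

lemma cc_succ (n : ℕ) : cc (n + 1) * (2 * n + 1) = cc n * (2 * n + 2) := by
  unfold cc
  have h : ((n : ℝ) + 1) * (Nat.centralBinom (n + 1) : ℝ)
      = 2 * (2 * n + 1) * (Nat.centralBinom n : ℝ) := by
    exact_mod_cast Nat.succ_mul_centralBinom_succ n
  have h1 : (0 : ℝ) < Nat.centralBinom n := by exact_mod_cast Nat.centralBinom_pos n
  have h2 : (0 : ℝ) < Nat.centralBinom (n + 1) := by
    exact_mod_cast Nat.centralBinom_pos (n + 1)
  field_simp
  rw [pow_succ]
  linear_combination (-2 * 4 ^ n : ℝ) * h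

lemma cc_le (n : ℕ) : cc n ≤ n + 1 := by
  induction n with
  | zero => simp [cc_zero]
  | succ n ih =>
    have h := cc_succ n
    have hn : (0 : ℝ) ≤ n := Nat.cast_nonneg n
    have : cc (n + 1) = cc n * (2 * n + 2) / (2 * n + 1) := by
      field_simp; linarith
    rw [this, div_le_iff₀ (by positivity)]
    push_cast
    nlinarith

/-- Recursive version of the head sums. -/
noncomputable def hd : ℕ → ℕ → ℝ
  | 0, _ => 1
  | a + 1, n => ∑ m ∈ Finset.range n, hd a m / (m : ℝ) ^ 2

lemma hd_nonneg (a n : ℕ) : 0 ≤ hd a n := by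
  induction a generalizing n with
  | zero => simp [hd]
  | succ a ih =>
    rw [hd]
    exact Finset.sum_nonneg fun m _ => div_nonneg (ih m) (by positivity)

lemma hd_le (a n : ℕ) : hd a n ≤ (n : ℝ) ^ a := by
  induction a generalizing n with
  | zero => simp [hd]
  | succ a ih =>
    rw [hd]
    calc ∑ m ∈ Finset.range n, hd a m / (m : ℝ) ^ 2 ≤ ∑ m ∈ Finset.range n, (n : ℝ) ^ a := by
          refine Finset.sum_le_sum fun m hm => ?_
          have hm' : (m : ℝ) ≤ n := by exact_mod_cast (Finset.mem_range.1 hm).le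
          rcases Nat.eq_zero_or_pos m with rfl | h
          · simp
          · have h1 : (1 : ℝ) ≤ m := by exact_mod_cast h
            calc hd a m / (m : ℝ) ^ 2 ≤ hd a m / 1 :=
                  div_le_div_of_nonneg_left (hd_nonneg a m) one_pos (one_le_pow₀ h1)
              _ = hd a m := div_one _
              _ ≤ (m : ℝ) ^ a := ih m
              _ ≤ (n : ℝ) ^ a := by gcongr
      _ = (n : ℝ) ^ (a + 1) := by simp [pow_succ, mul_comm]

noncomputable def uu (n : ℕ) (t : ℝ) : ℝ := cc n * sin t ^ (2 * n)

noncomputable def uu' (n : ℕ) (t : ℝ) : ℝ := cc n * (2 * n * sin t ^ (2 * n - 1) * cos t)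

lemma uu_deriv (n : ℕ) (t : ℝ) : HasDerivAt (uu n) (uu' n t) t := by
  unfold uu uu'
  have := ((hasDerivAt_sin t).pow (2 * n)).const_mul (cc n)
  refine HasDerivAt.congr_deriv (this) ?_
  push_cast; ring

lemma uu_deriv2 (n : ℕ) (t : ℝ) :
    HasDerivAt (uu' (n + 1)) (4 * (n + 1 : ℝ) ^ 2 * (uu n t - uu (n + 1) t)) t := by
  have e : uu' (n + 1) = fun t => cc (n + 1) * (2 * (n + 1)) * (sin t ^ (2 * n + 1) * cos t) := by
    funext t
    simp only [uu', show 2 * (n + 1) - 1 = 2 * n + 1 by omega]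
    push_cast; ring
  rw [e]
  have := (((hasDerivAt_sin t).pow (2 * n + 1)).mul (hasDerivAt_cos t)).const_mul
    (cc (n + 1) * (2 * (n + 1)))
  refine HasDerivAt.congr_deriv (this) ?_
  simp only [uu, Pi.pow_apply]
  have hc := cc_succ n
  have hs : cos t ^ 2 = 1 - sin t ^ 2 := by linarith [sin_sq_add_cos_sq t]
  push_cast
  simp only [show 2 * n + 1 - 1 = 2 * n by omega,
    show 2 * (n + 1) = 2 * n + 1 + 1 by ring, pow_succ _ (2 * n), pow_succ _ (2 * n + 1)]
  linear_combination (2 * (n + 1 : ℝ) * sin t ^ (2 * n)) * hc +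
    (cc (n + 1) * (2 * (n + 1)) * (2 * n + 1) * sin t ^ (2 * n)) * hs

/-- Partial sums. -/
noncomputable def FF : ℕ → ℕ → ℝ → ℝ
  | 0, _, _ => 1
  | a + 1, N, t => ∑ n ∈ Finset.range (N + 1), hd a n / (n : ℝ) ^ 2 * uu n t

noncomputable def FF' (a N : ℕ) (t : ℝ) : ℝ :=
  ∑ n ∈ Finset.range (N + 1), hd a n / (n : ℝ) ^ 2 * uu' n t

lemma FF_deriv (a N : ℕ) (t : ℝ) : HasDerivAt (FF (a + 1) N) (FF' a N t) t := by
  have : FF (a + 1) N = fun t => ∑ n ∈ Finset.range (N + 1), hd a n / (n : ℝ) ^ 2 * uu n t := by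
    funext t; rw [FF]
  rw [this]
  unfold FF'
  exact HasDerivAt.fun_sum fun n _ => (uu_deriv n t).const_mul _

lemma FF_succ (a N : ℕ) (t : ℝ) :
    FF a (N + 1) t - FF a N t = (hd a (N + 2) - hd a (N + 1)) * uu (N + 1) t := by
  cases a with
  | zero => simp [FF, hd]
  | succ a =>
    simp only [FF, hd, Finset.sum_range_succ _ (N + 1)]
    ring

lemma FF_zero (a : ℕ) (t : ℝ) : FF a 0 t - hd a 1 * uu 0 t = 0 := by
  cases a with
  | zero => simp [FF, hd, uu, cc_zero]
  | succ a => simp [FF, hd]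

lemma FF_deriv2 (a N : ℕ) (t : ℝ) :
    HasDerivAt (FF' a N) (4 * (FF a N t - hd a (N + 1) * uu N t)) t := by
  induction N with
  | zero =>
    have : FF' a 0 = fun _ => 0 := by funext t; simp [FF']
    rw [this, FF_zero]
    simpa using hasDerivAt_const t (0 : ℝ)
  | succ N ih =>
    have e : FF' a (N + 1) = fun t => FF' a N t +
        hd a (N + 1) / ((N + 1 : ℕ) : ℝ) ^ 2 * uu' (N + 1) t := by
      funext t; simp only [FF', Finset.sum_range_succ _ (N + 1)]
    rw [e]
    refine HasDerivAt.congr_deriv (ih.add ((uu_deriv2 N t).const_mul (hd a (N + 1) / ((N + 1 : ℕ) : ℝ) ^ 2))) ?_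
    have h := FF_succ a N t
    have : hd a (N + 1) / ((N + 1 : ℕ) : ℝ) ^ 2 * (4 * (N + 1 : ℝ) ^ 2 * (uu N t - uu (N + 1) t))
        = 4 * hd a (N + 1) * (uu N t - uu (N + 1) t) := by
      push_cast; field_simp
    rw [this]
    linear_combination -4 * h

noncomputable def AA (a : ℕ) (t : ℝ) : ℝ := (2 * t) ^ (2 * a) / (Nat.factorial (2 * a) : ℝ)

noncomputable def AA' (a : ℕ) (t : ℝ) : ℝ :=
  2 * ((2 * t) ^ (2 * a + 1) / (Nat.factorial (2 * a + 1) : ℝ))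

lemma pow_fact_deriv (k : ℕ) (t : ℝ) :
    HasDerivAt (fun t : ℝ => (2 * t) ^ (k + 1) / (Nat.factorial (k + 1) : ℝ))
      (2 * ((2 * t) ^ k / (Nat.factorial k : ℝ))) t := by
  have := ((((hasDerivAt_id t).const_mul 2).pow (k + 1))).div_const (Nat.factorial (k + 1) : ℝ)
  refine HasDerivAt.congr_deriv (this) ?_
  have h : (Nat.factorial k : ℝ) ≠ 0 := by exact_mod_cast Nat.factorial_ne_zero k
  rw [Nat.factorial_succ]
  push_cast
  simp
  field_simp

lemma AA_deriv (a : ℕ) (t : ℝ) : HasDerivAt (AA (a + 1)) (AA' a t) t :=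
  pow_fact_deriv (2 * a + 1) t

lemma AA_deriv2 (a : ℕ) (t : ℝ) : HasDerivAt (AA' a) (4 * AA a t) t := by
  have := (pow_fact_deriv (2 * a) t).const_mul 2
  refine HasDerivAt.congr_deriv (this) ?_
  unfold AA; ring

lemma nonneg_of_deriv {f f' : ℝ → ℝ} {T : ℝ} (hf : ∀ t, HasDerivAt f (f' t) t)
    (h0 : f 0 = 0) (h : ∀ t ∈ Set.Icc 0 T, 0 ≤ f' t) : ∀ t ∈ Set.Icc 0 T, 0 ≤ f t := by
  intro t ht
  have hm : MonotoneOn f (Set.Icc 0 T) := by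
    refine monotoneOn_of_deriv_nonneg (convex_Icc 0 T)
      (fun x _ => (hf x).continuousAt.continuousWithinAt)
      (fun x _ => (hf x).differentiableAt.differentiableWithinAt) ?_
    intro x hx
    rw [(hf x).deriv]
    exact h x (interior_subset hx)
  have := hm ⟨le_rfl, ht.1.trans ht.2⟩ ht ht.1
  rwa [h0] at this

lemma RR_d1 (a N : ℕ) (t : ℝ) :
    HasDerivAt (fun t => AA (a + 1) t - FF (a + 1) N t) (AA' a t - FF' a N t) t :=
  (AA_deriv a t).sub (FF_deriv a N t)

lemma RR_d2 (a N : ℕ) (t : ℝ) :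
    HasDerivAt (fun t => AA' a t - FF' a N t)
      (4 * ((AA a t - FF a N t) + hd a (N + 1) * uu N t)) t := by
  refine HasDerivAt.congr_deriv ((AA_deriv2 a t).sub (FF_deriv2 a N t)) ?_
  ring

lemma RR_0 (a N : ℕ) : AA (a + 1) 0 - FF (a + 1) N 0 = 0 := by
  have h1 : AA (a + 1) 0 = 0 := by simp [AA]
  have h2 : FF (a + 1) N 0 = 0 := by
    rw [FF]
    refine Finset.sum_eq_zero fun n _ => ?_
    rcases Nat.eq_zero_or_pos n with rfl | h
    · simp
    · simp [uu, h.ne']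
  rw [h1, h2, sub_zero]

lemma RR_0' (a N : ℕ) : AA' a 0 - FF' a N 0 = 0 := by
  have h1 : AA' a 0 = 0 := by simp [AA']
  have h2 : FF' a N 0 = 0 := by
    rw [FF']
    refine Finset.sum_eq_zero fun n _ => ?_
    rcases Nat.eq_zero_or_pos n with rfl | h
    · simp
    · simp [uu', show 2 * n - 1 ≠ 0 by omega]
  rw [h1, h2, sub_zero]

lemma uu_nonneg (n : ℕ) (t : ℝ) : 0 ≤ uu n t :=
  mul_nonneg (cc_pos n).le (by rw [pow_mul]; positivity)

lemma RR_nonneg (a N : ℕ) : ∀ t : ℝ, 0 ≤ t → 0 ≤ AA a t - FF a N t := by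
  induction a with
  | zero => intro t _; simp [AA, FF]
  | succ a ih =>
    intro t ht
    refine nonneg_of_deriv (RR_d1 a N) (RR_0 a N) ?_ t ⟨ht, le_rfl⟩
    refine nonneg_of_deriv (RR_d2 a N) (RR_0' a N) ?_
    intro s hs
    have := ih s hs.1
    have h2 := mul_nonneg (hd_nonneg a (N + 1)) (uu_nonneg N s)
    positivity

lemma RR_le (a N : ℕ) (T M : ℝ) 
    (h : ∀ t ∈ Set.Icc 0 T, (AA a t - FF a N t) + hd a (N + 1) * uu N t ≤ M) :
    ∀ t ∈ Set.Icc 0 T, AA (a + 1) t - FF (a + 1) N t ≤ 2 * M * t ^ 2 := by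
  have h1 : ∀ t ∈ Set.Icc 0 T, 0 ≤ 4 * M * t - (AA' a t - FF' a N t) := by
    refine nonneg_of_deriv (f' := fun t => 4 * M * 1 -
      (4 * ((AA a t - FF a N t) + hd a (N + 1) * uu N t)))
      (fun t => ((hasDerivAt_id t).const_mul (4 * M)).sub (RR_d2 a N t)) ?_ ?_
    · rw [RR_0']; simp
    · intro t ht
      linarith [h t ht]
  have h2 : ∀ t ∈ Set.Icc 0 T, 0 ≤ 2 * M * t ^ 2 - (AA (a + 1) t - FF (a + 1) N t) := by
    refine nonneg_of_deriv (f' := fun t => 2 * M * (((2 : ℕ) : ℝ) * t ^ (2 - 1)) -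
      (AA' a t - FF' a N t))
      (fun t => ((hasDerivAt_pow 2 t).const_mul (2 * M)).sub (RR_d1 a N t)) ?_ ?_
    · rw [RR_0]; simp
    · intro t ht
      have := h1 t ht
      norm_num
      linarith
  intro t ht
  linarith [h2 t ht]

lemma hu_bound (a N : ℕ) {t T : ℝ} (ht : t ∈ Set.Icc 0 T) (hT : T < π / 2) :
    hd a (N + 1) * uu N t ≤ ((N + 1 : ℕ) : ℝ) ^ (a + 1) * (sin T ^ 2) ^ N := by
  have h1 := hd_le a (N + 1)
  have h2 := cc_le N
  have hs : sin t ≤ sin T := sin_le_sin_of_le_of_le_pi_div_two (by linarith [ht.1, pi_pos]) hT.le ht.2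
  have hs0 : 0 ≤ sin t := sin_nonneg_of_nonneg_of_le_pi ht.1 (by linarith [ht.2, pi_pos])
  have hu : uu N t ≤ ((N + 1 : ℕ) : ℝ) * (sin T ^ 2) ^ N := by
    unfold uu
    rw [pow_mul]
    push_cast
    gcongr
  calc hd a (N + 1) * uu N t ≤ ((N + 1 : ℕ) : ℝ) ^ a * (((N + 1 : ℕ) : ℝ) * (sin T ^ 2) ^ N) :=
        mul_le_mul h1 hu (uu_nonneg _ _) (by positivity)
    _ = _ := by rw [pow_succ]; ring

lemma hu_tendsto (a : ℕ) {T : ℝ} (h0 : 0 < T) (hT : T < π / 2) :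
    Filter.Tendsto (fun N : ℕ => ((N + 1 : ℕ) : ℝ) ^ (a + 1) * (sin T ^ 2) ^ N)
      Filter.atTop (nhds 0) := by
  have hs0 : 0 < sin T := sin_pos_of_pos_of_lt_pi h0 (by linarith [pi_pos])
  have hc0 : 0 < cos T := cos_pos_of_mem_Ioo ⟨by linarith, hT⟩
  have hlt : |sin T ^ 2| < 1 := by
    rw [abs_of_nonneg (by positivity)]
    nlinarith [sin_sq_add_cos_sq T]
  have h := tendsto_pow_const_mul_const_pow_of_abs_lt_one (a + 1) hlt
  have h' := ((Filter.tendsto_add_atTop_iff_nat 1).2 h).div_const (sin T ^ 2)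
  rw [zero_div] at h'
  refine h'.congr fun N => ?_
  rw [pow_succ (sin T ^ 2) N]
  field_simp

lemma RR_bound (a : ℕ) {T : ℝ} (h0 : 0 < T) (hT : T < π / 2) :
    ∃ e : ℕ → ℝ, Filter.Tendsto e Filter.atTop (nhds 0) ∧
      ∀ N, ∀ t ∈ Set.Icc 0 T, AA a t - FF a N t ≤ e N := by
  induction a with
  | zero => exact ⟨fun _ => 0, tendsto_const_nhds, fun N t _ => by simp [AA, FF]⟩
  | succ a ih =>
    obtain ⟨e, he, hb⟩ := ih
    refine ⟨fun N => 2 * (e N + ((N + 1 : ℕ) : ℝ) ^ (a + 1) * (sin T ^ 2) ^ N) * T ^ 2, ?_, ?_⟩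
    · have := ((he.add (hu_tendsto a h0 hT)).const_mul 2).mul_const (T ^ 2)
      simpa using this
    · intro N t ht
      have key := RR_le a N T (e N + ((N + 1 : ℕ) : ℝ) ^ (a + 1) * (sin T ^ 2) ^ N)
        (fun t ht => add_le_add (hb N t ht) (hu_bound a N ht hT)) t ht
      refine key.trans ?_
      have hM : 0 ≤ e N + ((N + 1 : ℕ) : ℝ) ^ (a + 1) * (sin T ^ 2) ^ N := by
        have h1 := RR_nonneg a N t ht.1
        have h2 := hb N t ht
        have : 0 ≤ ((N + 1 : ℕ) : ℝ) ^ (a + 1) * (sin T ^ 2) ^ N := by positivity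
        linarith
      have h3 := ht.1
      have h4 := ht.2
      show _ ≤ 2 * (e N + ((N + 1 : ℕ) : ℝ) ^ (a + 1) * (sin T ^ 2) ^ N) * T ^ 2
      gcongr

lemma FF_tendsto (a : ℕ) {T : ℝ} (h0 : 0 < T) (hT : T < π / 2) :
    Filter.Tendsto (fun N => FF a N T) Filter.atTop (nhds (AA a T)) := by
  obtain ⟨e, he, hb⟩ := RR_bound a h0 hT
  have h : Filter.Tendsto (fun N => AA a T - FF a N T) Filter.atTop (nhds 0) :=
    squeeze_zero (fun N => RR_nonneg a N T h0.le) (fun N => hb N T ⟨h0.le, le_rfl⟩) he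
  have := h.const_sub (AA a T)
  simpa using this

noncomputable def KK (b n : ℕ) : ℝ := ∫ t in (0:ℝ)..(π / 2), cos t ^ (2 * n) * AA b t

noncomputable def kk (b n : ℕ) : ℝ := cc n * KK b n * (2 / π)

lemma AA_cont (b : ℕ) : Continuous (AA b) := by unfold AA; fun_prop

lemma AA'_cont (b : ℕ) : Continuous (AA' b) := by unfold AA'; fun_prop

lemma cos_d1 (n : ℕ) (t : ℝ) : HasDerivAt (fun t => cos t ^ (2 * n + 2))
    (-(2 * n + 2) * (cos t ^ (2 * n + 1) * sin t)) t := by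
  refine HasDerivAt.congr_deriv ((hasDerivAt_cos t).pow (2 * n + 2)) ?_
  simp only [show 2 * n + 2 - 1 = 2 * n + 1 by omega]
  push_cast; ring

lemma cos_d2 (n : ℕ) (t : ℝ) : HasDerivAt (fun t => -(2 * n + 2 : ℝ) * (cos t ^ (2 * n + 1) * sin t))
    ((2 * n + 2) * (2 * n + 1) * cos t ^ (2 * n) - (2 * n + 2) ^ 2 * cos t ^ (2 * n + 2)) t := by
  refine HasDerivAt.congr_deriv ((((hasDerivAt_cos t).pow (2 * n + 1)).mul (hasDerivAt_sin t)).const_mul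
    (-(2 * n + 2 : ℝ))) ?_
  simp only [Pi.pow_apply, show 2 * n + 1 - 1 = 2 * n by omega]
  have hs : sin t ^ 2 = 1 - cos t ^ 2 := by linarith [sin_sq_add_cos_sq t]
  push_cast
  simp only [pow_succ _ (2 * n), pow_succ _ (2 * n + 1)]
  linear_combination ((2 * n + 2 : ℝ) * (2 * n + 1) * cos t ^ (2 * n)) * hs

lemma KK_int (b n : ℕ) : IntervalIntegrable (fun t => cos t ^ (2 * n) * AA b t)
    MeasureTheory.volume 0 (π / 2) := by
  have := AA_cont b
  exact Continuous.intervalIntegrable (by fun_prop) _ _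

lemma KK_zero (n : ℕ) : (2 * n + 2) * KK 0 (n + 1) = (2 * n + 1) * KK 0 n := by
  have h := intervalIntegral.integral_eq_sub_of_hasDerivAt (a := 0) (b := π / 2)
    (fun t _ => cos_d2 n t) (Continuous.intervalIntegrable (by fun_prop) _ _)
  rw [cos_pi_div_two, sin_zero] at h
  have e : ∫ t in (0:ℝ)..(π / 2), ((2 * n + 2 : ℝ) * (2 * n + 1) * cos t ^ (2 * n)
      - (2 * n + 2) ^ 2 * cos t ^ (2 * n + 2)) =
      (2 * n + 2) * (2 * n + 1) * KK 0 n - (2 * n + 2) ^ 2 * KK 0 (n + 1) := by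
    unfold KK
    rw [← intervalIntegral.integral_const_mul, ← intervalIntegral.integral_const_mul,
      ← intervalIntegral.integral_sub ((KK_int 0 n).const_mul _) ((KK_int 0 (n+1)).const_mul _)]
    simp [AA, mul_add]
  rw [e] at h
  simp at h
  have hp : (0 : ℝ) < 2 * n + 2 := by positivity
  apply mul_left_cancel₀ hp.ne'
  linarith

lemma KK_succ (b n : ℕ) : (2 * n + 2) * (2 * n + 1) * KK (b + 1) n
    - (2 * n + 2) ^ 2 * KK (b + 1) (n + 1) = 4 * KK b (n + 1) := by
  have := AA_cont b
  have := AA_cont (b + 1)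
  have := AA'_cont b
  have hd : ∀ t : ℝ, HasDerivAt (fun t => -(2 * n + 2 : ℝ) * (cos t ^ (2 * n + 1) * sin t) * AA (b + 1) t
      - cos t ^ (2 * n + 2) * AA' b t)
      ((2 * n + 2) * (2 * n + 1) * (cos t ^ (2 * n) * AA (b + 1) t)
        - (2 * n + 2) ^ 2 * (cos t ^ (2 * (n + 1)) * AA (b + 1) t)
        - 4 * (cos t ^ (2 * (n + 1)) * AA b t)) t := by
    intro t
    refine HasDerivAt.congr_deriv (((cos_d2 n t).mul (AA_deriv b t)).sub ((cos_d1 n t).mul (AA_deriv2 b t))) ?_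
    rw [show 2 * (n + 1) = 2 * n + 2 by ring]
    ring
  have h := intervalIntegral.integral_eq_sub_of_hasDerivAt (a := 0) (b := π / 2)
    (fun t _ => hd t) (Continuous.intervalIntegrable (by fun_prop) _ _)
  rw [cos_pi_div_two, sin_zero, intervalIntegral.integral_sub
      (((KK_int (b+1) n).const_mul _).sub ((KK_int (b+1) (n+1)).const_mul _))
      ((KK_int b (n+1)).const_mul _),
    intervalIntegral.integral_sub ((KK_int (b+1) n).const_mul _) ((KK_int (b+1) (n+1)).const_mul _),
    intervalIntegral.integral_const_mul, intervalIntegral.integral_const_mul,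
    intervalIntegral.integral_const_mul] at h
  have e0 : AA' b 0 = 0 := by simp [AA']
  rw [e0] at h
  change (2 * n + 2) * (2 * n + 1) * KK (b + 1) n
    - (2 * n + 2) ^ 2 * KK (b + 1) (n + 1) - 4 * KK b (n + 1) = _ at h
  simp at h
  linarith

lemma kk_zero (n : ℕ) : kk 0 n = 1 := by
  induction n with
  | zero =>
    simp [kk, KK, AA, cc_zero]
  | succ n ih =>
    rw [← ih]
    unfold kk
    congr 1
    have h1 := KK_zero n
    have h2 := cc_succ n
    have hp : (0 : ℝ) < (2 * n + 2) * (2 * n + 1) := by positivity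
    apply mul_left_cancel₀ hp.ne'
    linear_combination (2 * n + 1) * cc (n + 1) * h1 + KK 0 n * (2 * n + 1) * h2

lemma kk_succ (b n : ℕ) :
    kk (b + 1) n - kk (b + 1) (n + 1) = kk b (n + 1) / ((n + 1 : ℕ) : ℝ) ^ 2 := by
  unfold kk
  have h1 := KK_succ b n
  have h2 := cc_succ n
  push_cast
  rw [eq_div_iff (by positivity)]
  have e : cc n = cc (n + 1) * (2 * n + 1) / (2 * n + 2) := by
    field_simp; linarith
  rw [e]
  field_simp
  linear_combination cc (n + 1) * h1 / 2

lemma AA_nonneg (b : ℕ) (t : ℝ) : 0 ≤ AA b t := by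
  unfold AA
  rw [pow_mul]; positivity

lemma KK_nonneg (b n : ℕ) : 0 ≤ KK b n := by
  refine intervalIntegral.integral_nonneg (by positivity) fun t _ => ?_
  rw [pow_mul]
  exact mul_nonneg (by positivity) (AA_nonneg b t)

lemma kk_nonneg (b n : ℕ) : 0 ≤ kk b n := by
  have := cc_pos n
  have := KK_nonneg b n
  unfold kk; positivity

lemma AA_le (b : ℕ) {t : ℝ} (h0 : 0 ≤ t) (h1 : t ≤ π / 2) :
    AA (b + 1) t ≤ π ^ (2 * b + 2) * sin t ^ 2 := by
  have hs : 2 * t ≤ π * sin t := by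
    have := mul_le_sin h0 h1
    have hp := pi_pos
    calc 2 * t = π * (2 / π * t) := by field_simp
      _ ≤ π * sin t := by gcongr
  have hs0 : 0 ≤ sin t := sin_nonneg_of_nonneg_of_le_pi h0 (by linarith [pi_pos])
  unfold AA
  have hf : (1 : ℝ) ≤ (Nat.factorial (2 * (b + 1)) : ℝ) := by
    exact_mod_cast Nat.factorial_pos _
  calc (2 * t) ^ (2 * (b + 1)) / (Nat.factorial (2 * (b + 1)) : ℝ) ≤ (2 * t) ^ (2 * (b + 1)) :=
        div_le_self (by positivity) hf
    _ ≤ (π * sin t) ^ (2 * (b + 1)) := by gcongr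
    _ = π ^ (2 * b + 2) * sin t ^ (2 * b + 2) := by rw [mul_pow]; rfl
    _ ≤ π ^ (2 * b + 2) * sin t ^ 2 := by
      have := pow_le_pow_of_le_one hs0 (sin_le_one t) (show 2 ≤ 2 * b + 2 by omega)
      have hp := pi_pos
      gcongr

lemma kk_le (b n : ℕ) : kk (b + 1) n ≤ π ^ (2 * b + 2) / (2 * n + 2) := by
  have h1 : KK (b + 1) n ≤ π ^ (2 * b + 2) * (KK 0 n - KK 0 (n + 1)) := by
    unfold KK
    rw [← intervalIntegral.integral_sub (KK_int 0 n) (KK_int 0 (n + 1)),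
      ← intervalIntegral.integral_const_mul]
    refine intervalIntegral.integral_mono_on (by positivity) (KK_int _ _)
      (((KK_int 0 n).sub (KK_int 0 (n+1))).const_mul _) ?_
    intro t ht
    have h := AA_le b ht.1 ht.2
    have hc : 0 ≤ cos t ^ (2 * n) := by rw [pow_mul]; positivity
    calc cos t ^ (2 * n) * AA (b + 1) t ≤ cos t ^ (2 * n) * (π ^ (2 * b + 2) * sin t ^ 2) := by
          gcongr
      _ = _ := by
        rw [sin_sq, show 2 * (n + 1) = 2 * n + 2 by ring, pow_add]
        simp [AA]
        ring
  have h2 := KK_zero n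
  have h3 := kk_zero n
  have hp := pi_pos
  have e : KK 0 n - KK 0 (n + 1) = KK 0 n / (2 * n + 2) := by
    field_simp; linarith
  rw [e] at h1
  have hc := cc_pos n
  calc kk (b + 1) n ≤ cc n * (π ^ (2 * b + 2) * (KK 0 n / (2 * n + 2))) * (2 / π) := by
        unfold kk; gcongr
    _ = π ^ (2 * b + 2) / (2 * n + 2) * kk 0 n := by unfold kk; ring
    _ = _ := by rw [h3, mul_one]

lemma kk_tendsto (b : ℕ) : Filter.Tendsto (fun n => kk (b + 1) n) Filter.atTop (nhds 0) := by
  refine squeeze_zero (fun n => kk_nonneg _ n) (fun n => kk_le b n) ?_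
  refine Filter.Tendsto.const_div_atTop ?_ _
  refine Filter.tendsto_atTop_add_const_right _ _ ?_
  exact (tendsto_natCast_atTop_atTop (R := ℝ)).const_mul_atTop (by norm_num)

lemma kk_hasSum (b n : ℕ) :
    HasSum (fun j : ℕ => 1 / ((n + 1 + j : ℕ) : ℝ) ^ 2 * kk b (n + 1 + j)) (kk (b + 1) n) := by
  rw [hasSum_iff_tendsto_nat_of_nonneg (fun j => mul_nonneg (by positivity) (kk_nonneg _ _))]
  have e : ∀ N : ℕ, ∑ j ∈ Finset.range N, 1 / ((n + 1 + j : ℕ) : ℝ) ^ 2 * kk b (n + 1 + j)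
      = kk (b + 1) n - kk (b + 1) (n + N) := by
    intro N
    induction N with
    | zero => simp
    | succ N ih =>
      rw [Finset.sum_range_succ, ih]
      have := kk_succ b (n + N)
      rw [show n + 1 + N = n + N + 1 by ring, show n + (N + 1) = n + N + 1 by ring]
      linear_combination -this
  simp_rw [e]
  have h : Filter.Tendsto (fun N => kk (b + 1) (n + N)) Filter.atTop (nhds 0) := by
    have := (Filter.tendsto_add_atTop_iff_nat n).2 (kk_tendsto b)
    simpa [add_comm] using this
  simpa using h.const_sub (kk (b + 1) n)

/-- Index type of tails. -/
abbrev TT (b n : ℕ) := {f : Fin b → ℕ // StrictMono f ∧ ∀ i, n < f i}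

def tailEquiv (b n : ℕ) : (Σ j : ℕ, TT b (n + 1 + j)) ≃ TT (b + 1) n where
  toFun p := ⟨Fin.cons (n + 1 + p.1) p.2.1, by
    refine ⟨?_, ?_⟩
    · rw [Fin.strictMono_iff_lt_succ]
      intro i
      cases b with
      | zero => exact i.elim0
      | succ b =>
        refine Fin.cases ?_ (fun i => ?_) i
        · simpa using p.2.2.2 0
        · have := p.2.2.1 (Fin.castSucc_lt_succ (i := i))
          rw [← Fin.succ_castSucc]
          simpa using this
    · intro i
      refine Fin.cases ?_ (fun i => ?_) i
      · simp; omega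
      · have := p.2.2.2 i
        simp; omega⟩
  invFun f := ⟨f.1 0 - (n + 1), ⟨Fin.tail f.1, by
    have h0 := f.2.2 0
    refine ⟨fun i j h => f.2.1 (by simpa using h), fun i => ?_⟩
    have := f.2.1 (Fin.succ_pos i)
    simp only [Fin.tail]
    omega⟩⟩
  left_inv p := by
    obtain ⟨j, f, hf⟩ := p
    have : (n + 1 + j) - (n + 1) = j := by omega
    refine Sigma.ext this ?_
    refine (Subtype.heq_iff_coe_eq ?_).2 ?_
    · intro g
      simp [this]
    · simp
  right_inv f := by
    have h0 := f.2.2 0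
    apply Subtype.ext
    have : n + 1 + (f.1 0 - (n + 1)) = f.1 0 := by omega
    simp only [this]
    exact Fin.cons_self_tail f.1

lemma tail_hasSum (b n : ℕ) :
    HasSum (fun f : TT b n => ∏ i, 1 / ((f.1 i : ℝ)) ^ 2) (kk b n) := by
  induction b generalizing n with
  | zero =>
    rw [kk_zero]
    have hu : ∀ f : TT 0 n, f = ⟨Fin.elim0, fun i => i.elim0, fun i => i.elim0⟩ := fun f =>
      Subtype.ext (funext fun i => i.elim0)
    convert hasSum_single (f := fun f : TT 0 n => ∏ i, 1 / ((f.1 i : ℝ)) ^ 2)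
      ⟨Fin.elim0, fun i => i.elim0, fun i => i.elim0⟩ (fun g hg => absurd (hu g) hg) using 1
    simp
  | succ b ih =>
    rw [← (tailEquiv b n).hasSum_iff]
    have e : ∀ p : (Σ j : ℕ, TT b (n + 1 + j)),
        ((fun f : TT (b + 1) n => ∏ i, 1 / ((f.1 i : ℝ)) ^ 2) ∘ (tailEquiv b n)) p =
        1 / ((n + 1 + p.1 : ℕ) : ℝ) ^ 2 * ∏ i, 1 / ((p.2.1 i : ℝ)) ^ 2 := by
      intro p
      simp only [Function.comp, tailEquiv, Equiv.coe_fn_mk]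
      rw [Fin.prod_univ_succ]
      simp
    rw [funext e]
    have h1 : ∀ j : ℕ, HasSum (fun f : TT b (n + 1 + j) =>
        1 / ((n + 1 + j : ℕ) : ℝ) ^ 2 * ∏ i, 1 / ((f.1 i : ℝ)) ^ 2)
        (1 / ((n + 1 + j : ℕ) : ℝ) ^ 2 * kk b (n + 1 + j)) := fun j => (ih _).mul_left _
    have hs : Summable (fun p : (Σ j : ℕ, TT b (n + 1 + j)) =>
        1 / ((n + 1 + p.1 : ℕ) : ℝ) ^ 2 * ∏ i, 1 / ((p.2.1 i : ℝ)) ^ 2) := by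
      rw [summable_sigma_of_nonneg (fun p => by positivity)]
      refine ⟨fun j => (h1 j).summable, ?_⟩
      simp only [fun j => (h1 j).tsum_eq]
      exact (kk_hasSum b n).summable
    have := hs.hasSum.sigma h1
    rw [← this.unique (kk_hasSum b n)]
    exact hs.hasSum

lemma zetaTail_eq (b n : ℕ) : zetaTail b n = kk b n := (tail_hasSum b n).tsum_eq

/-- Index type of heads. -/
abbrev HH (a n : ℕ) := {f : Fin a → ℕ // StrictMono f ∧ ∀ i, 0 < f i ∧ f i < n}

instance (a n : ℕ) : Finite (HH a n) := by
  refine Finite.of_injective (β := Fin a → Fin n) (fun f i => ⟨f.1 i, (f.2.2 i).2⟩) ?_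
  intro f g h
  apply Subtype.ext
  funext i
  have := congrFun h i
  simpa using this

def headEquiv (a n : ℕ) : (Σ j : {m : Fin n // 0 < m.1}, HH a j.1.1) ≃ HH (a + 1) n where
  toFun p := ⟨Fin.snoc p.2.1 p.1.1.1, by
    refine ⟨?_, ?_⟩
    · intro i j
      refine Fin.lastCases ?_ (fun j => ?_) j
      · refine Fin.lastCases ?_ (fun i => ?_) i
        · simp
        · intro _
          simpa using (p.2.2.2 i).2
      · refine Fin.lastCases ?_ (fun i => ?_) i
        · intro h
          exact absurd h (not_lt.2 (Fin.le_last _))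
        · intro h
          have := p.2.2.1 (show i < j by simpa using h)
          simpa using this
    · intro i
      refine Fin.lastCases ?_ (fun i => ?_) i
      · simpa using p.1.2
      · have := p.2.2.2 i
        have h2 := p.1.1.2
        simp; omega⟩
  invFun f := ⟨⟨⟨f.1 (Fin.last a), (f.2.2 _).2⟩, (f.2.2 _).1⟩, ⟨Fin.init f.1, by
    refine ⟨fun i j h => f.2.1 (by simpa using h), fun i => ?_⟩
    exact ⟨(f.2.2 _).1, f.2.1 (Fin.castSucc_lt_last i)⟩⟩⟩
  left_inv p := by
    obtain ⟨⟨⟨j, hj⟩, hj'⟩, f, hf⟩ := p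
    have : (Fin.snoc (α := fun _ => ℕ) f j : Fin (a + 1) → ℕ) (Fin.last a) = j := by simp
    refine Sigma.ext (Subtype.ext (Fin.ext this)) ?_
    refine (Subtype.heq_iff_coe_eq ?_).2 ?_
    · intro g
      simp
    · simp
  right_inv f := by
    apply Subtype.ext
    exact Fin.snoc_init_self f.1

lemma zetaHead_eq (a n : ℕ) : zetaHead a n = hd a n := by
  induction a generalizing n with
  | zero =>
    have hu : ∀ f : HH 0 n, f = ⟨Fin.elim0, fun i => i.elim0, fun i => i.elim0⟩ := fun f =>
      Subtype.ext (funext fun i => i.elim0)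
    unfold zetaHead
    rw [tsum_eq_single (⟨Fin.elim0, fun i => i.elim0, fun i => i.elim0⟩ : HH 0 n)
      (fun g hg => absurd (hu g) hg)]
    simp [hd]
  | succ a ih =>
    unfold zetaHead
    rw [← (headEquiv a n).tsum_eq]
    have e : ∀ p : (Σ j : {m : Fin n // 0 < m.1}, HH a j.1.1),
        (∏ i, 1 / (((headEquiv a n p).1 i : ℝ)) ^ 2) =
        1 / (p.1.1.1 : ℝ) ^ 2 * ∏ i, 1 / ((p.2.1 i : ℝ)) ^ 2 := by
      intro p
      simp only [headEquiv, Equiv.coe_fn_mk]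
      rw [Fin.prod_univ_castSucc]
      simp [mul_comm]
    simp_rw [e]
    rw [Summable.tsum_sigma Summable.of_finite]
    simp_rw [tsum_mul_left]
    have e2 : ∀ j : {m : Fin n // 0 < m.1}, ∑' f : HH a j.1.1, ∏ i, 1 / ((f.1 i : ℝ)) ^ 2
        = hd a j.1.1 := fun j => ih _
    simp_rw [e2]
    rw [hd, Finset.sum_range]
    rw [tsum_fintype]
    rw [← Finset.sum_subtype (Finset.univ.filter fun m : Fin n => 0 < m.1) (by simp)
      (fun m : Fin n => 1 / (m.1 : ℝ) ^ 2 * hd a m.1)]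
    rw [Finset.sum_filter]
    refine Finset.sum_congr rfl fun m _ => ?_
    split_ifs with h
    · ring
    · have : m.1 = 0 := by omega
      simp [this]

noncomputable def QQ (b : ℕ) (x : ℝ) : ℝ :=
  (2 * arccos x) ^ (2 * b + 1) / (Nat.factorial (2 * b + 1) : ℝ)

lemma QQ_cont (b : ℕ) : Continuous (QQ b) := by
  unfold QQ
  have := continuous_arccos
  fun_prop

lemma moment (b n : ℕ) : ∫ x in (0:ℝ)..1, x ^ (2 * n + 1) * QQ b x = KK b (n + 1) / (n + 1) := by
  have hQ := QQ_cont b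
  have hA := AA_cont b
  have h := intervalIntegral.integral_comp_mul_deriv (a := π / 2) (b := 0) (f := cos)
    (f' := fun t => -sin t) (g := fun x => x ^ (2 * n + 1) * QQ b x)
    (fun t _ => hasDerivAt_cos t) (by fun_prop) (by fun_prop)
  rw [cos_pi_div_two, cos_zero] at h
  rw [← h, intervalIntegral.integral_symm, ← intervalIntegral.integral_neg]
  have hd : ∀ t : ℝ, HasDerivAt (fun t => cos t ^ (2 * n + 2) *
      ((2 * t) ^ (2 * b + 1) / (Nat.factorial (2 * b + 1) : ℝ)))
      (2 * (cos t ^ (2 * (n + 1)) * AA b t) - (2 * n + 2) * (cos t ^ (2 * n + 1) * sin t *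
        ((2 * t) ^ (2 * b + 1) / (Nat.factorial (2 * b + 1) : ℝ)))) t := by
    intro t
    refine HasDerivAt.congr_deriv ((cos_d1 n t).mul (pow_fact_deriv (2 * b) t)) ?_
    rw [show 2 * (n + 1) = 2 * n + 2 by ring]
    unfold AA
    ring
  have h2 := intervalIntegral.integral_eq_sub_of_hasDerivAt (a := 0) (b := π / 2)
    (fun t _ => hd t) (Continuous.intervalIntegrable (by fun_prop) _ _)
  rw [intervalIntegral.integral_sub ((KK_int b (n+1)).const_mul _)
      (Continuous.intervalIntegrable (by fun_prop) _ _),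
    intervalIntegral.integral_const_mul, intervalIntegral.integral_const_mul, cos_pi_div_two] at h2
  change 2 * KK b (n + 1) - _ = _ at h2
  have e : ∫ t in (0:ℝ)..(π / 2), -(((fun x => x ^ (2 * n + 1) * QQ b x) ∘ cos) t * -sin t) =
      ∫ t in (0:ℝ)..(π / 2), (cos t ^ (2 * n + 1) * sin t *
        ((2 * t) ^ (2 * b + 1) / (Nat.factorial (2 * b + 1) : ℝ))) := by
    refine intervalIntegral.integral_congr fun t ht => ?_
    rw [Set.uIcc_of_le (by positivity)] at ht
    simp only [Function.comp, QQ]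
    rw [arccos_cos ht.1 (by linarith [ht.2, pi_pos])]
    ring
  rw [e, eq_div_iff (by positivity)]
  simp at h2
  linarith

lemma QQ_nonneg (b : ℕ) (x : ℝ) : 0 ≤ QQ b x := by
  have := arccos_nonneg x
  unfold QQ
  positivity

lemma QQ_le (b : ℕ) {x : ℝ} (hx : 0 ≤ x) : QQ b x ≤ π ^ (2 * b + 1) := by
  have h0 := arccos_nonneg x
  have h1 : 2 * arccos x ≤ π := by linarith [arccos_le_pi_div_two.2 hx]
  have hf : (1 : ℝ) ≤ (Nat.factorial (2 * b + 1) : ℝ) := by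
    exact_mod_cast Nat.factorial_pos _
  unfold QQ
  calc _ ≤ (2 * arccos x) ^ (2 * b + 1) := div_le_self (by positivity) hf
    _ ≤ _ := by gcongr

lemma FF_nonneg (a N : ℕ) (t : ℝ) : 0 ≤ FF (a + 1) N t := by
  rw [FF]
  exact Finset.sum_nonneg fun n _ =>
    mul_nonneg (div_nonneg (hd_nonneg _ _) (by positivity)) (uu_nonneg _ _)

noncomputable def GG (a b N : ℕ) (x : ℝ) : ℝ :=
  ∑ n ∈ Finset.range N, hd a (n + 1) / ((n + 1 : ℕ) : ℝ) ^ 2 * cc (n + 1) *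
    (x ^ (2 * n + 1) * QQ b x)

lemma GG_cont (a b N : ℕ) : Continuous (GG a b N) := by
  have := QQ_cont b
  unfold GG
  fun_prop

lemma GG_eq (a b N : ℕ) {x : ℝ} (h0 : 0 < x) (h1 : x ≤ 1) :
    GG a b N x = FF (a + 1) N (arcsin x) / x * QQ b x := by
  rw [FF, Finset.sum_range_succ']
  simp only [Nat.cast_zero, ne_eq, OfNat.ofNat_ne_zero, not_false_eq_true, zero_pow, div_zero,
    zero_mul, add_zero]
  rw [GG, Finset.sum_div, Finset.sum_mul]
  refine Finset.sum_congr rfl fun n _ => ?_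
  rw [uu, sin_arcsin (by linarith) h1, show 2 * (n + 1) = 2 * n + 1 + 1 by ring,
    pow_succ x (2 * n + 1)]
  field_simp

lemma GG_integral (a b N : ℕ) : ∫ x in (0:ℝ)..1, GG a b N x =
    ∑ n ∈ Finset.range N, π / 2 * (1 / ((n + 1 : ℕ) : ℝ) ^ 3 * hd a (n + 1) * kk b (n + 1)) := by
  have hQ := QQ_cont b
  unfold GG
  rw [intervalIntegral.integral_finsetSum
    (fun n _ => Continuous.intervalIntegrable (by fun_prop) _ _)]
  refine Finset.sum_congr rfl fun n _ => ?_
  rw [intervalIntegral.integral_const_mul, moment, kk]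
  have hp := pi_pos
  push_cast
  field_simp

lemma GG_tendsto (a b : ℕ) : Filter.Tendsto (fun N => ∫ x in (0:ℝ)..1, GG a b N x) Filter.atTop
    (nhds (∫ x in (0:ℝ)..1, AA (a + 1) (arcsin x) / x * QQ b x)) := by
  refine intervalIntegral.tendsto_integral_filter_of_dominated_convergence
    (fun _ => π ^ (2 * a + 2) * π ^ (2 * b + 1)) ?_ ?_ ?_ ?_
  · exact Filter.Eventually.of_forall fun N => (GG_cont a b N).aestronglyMeasurable
  · refine Filter.Eventually.of_forall fun N => Filter.Eventually.of_forall fun x hx => ?_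
    rw [Set.uIoc_of_le zero_le_one] at hx
    have hx0 := hx.1
    have ha0 : 0 ≤ arcsin x := arcsin_nonneg.2 hx0.le
    have h1 := FF_nonneg a N (arcsin x)
    have h2 : FF (a + 1) N (arcsin x) ≤ π ^ (2 * a + 2) * x ^ 2 := by
      have h3 := AA_le a ha0 (arcsin_le_pi_div_two x)
      rw [sin_arcsin (by linarith) hx.2] at h3
      linarith [RR_nonneg (a + 1) N (arcsin x) ha0]
    have hQ0 := QQ_nonneg b x
    have hp := pi_pos
    rw [GG_eq a b N hx0 hx.2, Real.norm_of_nonneg (by positivity)]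
    refine mul_le_mul ?_ (QQ_le b hx0.le) hQ0 (by positivity)
    rw [div_le_iff₀ hx0]
    refine h2.trans ?_
    have : x ^ 2 ≤ x := by nlinarith [hx.2]
    gcongr
  · exact intervalIntegrable_const
  · have hne : ∀ᵐ x : ℝ, x ≠ 1 := by simp [MeasureTheory.ae_iff]
    filter_upwards [hne] with x hx1 hx
    rw [Set.uIoc_of_le zero_le_one] at hx
    have hlt : x < 1 := lt_of_le_of_ne hx.2 hx1
    have h := FF_tendsto (a + 1) (arcsin_pos.2 hx.1) (arcsin_lt_pi_div_two.2 hlt)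
    exact ((h.div_const x).mul_const (QQ b x)).congr fun N => (GG_eq a b N hx.1 hx.2).symm

theorem integral_arcsin_arccos_eq_H (a b : ℕ) :
    (∫ x in (0:ℝ)..1,
        (2 * Real.arcsin x) ^ (2 * a + 2) / ((Nat.factorial (2 * a + 2)) * x) *
          ((2 * Real.arccos x) ^ (2 * b + 1) / (Nat.factorial (2 * b + 1)))) =
      (π / 2) * H a b := by
  have h := GG_tendsto a b
  simp_rw [GG_integral] at h
  have hp := pi_pos
  rw [← hasSum_iff_tendsto_nat_of_nonneg (fun n => by
    have := hd_nonneg a (n + 1)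
    have := kk_nonneg b (n + 1)
    positivity)] at h
  have e : H a b = ∑' n : ℕ, 1 / ((n + 1 : ℕ) : ℝ) ^ 3 * hd a (n + 1) * kk b (n + 1) := by
    unfold H
    simp_rw [zetaHead_eq, zetaTail_eq]
    exact tsum_pnat_eq_tsum_succ (f := fun n : ℕ => 1 / (n : ℝ) ^ 3 * hd a n * kk b n)
  rw [e, ← tsum_mul_left, h.tsum_eq]
  refine intervalIntegral.integral_congr fun x _ => ?_
  simp only [AA, QQ, div_div]
  rfl
end
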